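/- Let p ∈ (0,1) be fixed. Then with high probability sat(G(n,p), C_4) ≥ (3/2)·n·(1+o(1)); that is, for every ε > 0, whp sat(G(n,p), C_4) ≥ (3/2 − ε)·n. -/

import Mathlib

/-!
The ends of an edge of `G` missing from a `C_4`-saturated `H ≤ G` are joined by a walk of length
three in `H`, so a set of vertices in which each vertex starts at most `D` such walks has size at
most `O(D α)`, where `α` is the independence number of `G`. Call a vertex a hub if its degree in
`H` is at least `K`. Letting each hub give one unit of its degree to each of its neighbours leaves
every vertex that is not a hub with weight at least `3`, except the leaves at a hub and the
vertices of degree at most two with no hub neighbour. The leaves at a fixed hub are independent in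
`G`, so there are at most `α` of them. A walk of length three between two vertices of the second
kind has interior vertices of degree below `K`, so there are only `O(K² α)` such vertices. The
number of hubs being at most `2 e(H) / K`, taking `K = C (α + 1)` with `C` large makes all the
exceptions at most `ε n` in number as soon as `α³ = o(n)`; in `G(n, p)` the independence number is
`O(log n / p)` with high probability by the first moment bound.
-/

open MeasureTheory Filter Real

/-- The index type of potential edges of a graph on `Fin n`. -/
abbrev EdgeType (n : ℕ) := {e : Sym2 (Fin n) // ¬ e.IsDiag}

/-- The product Bernoulli measure on edge-indicator functions: the binomial
random graph `G(n,p)`. -/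
noncomputable def erMeasure (n : ℕ) (p : ℝ) : Measure (EdgeType n → Bool) :=
  Measure.pi fun _ => (PMF.bernoulli (min (Real.toNNReal p) 1) (min_le_right _ _)).toMeasure

/-- The simple graph determined by an edge-indicator function. -/
def graphOf {n : ℕ} (ω : EdgeType n → Bool) : SimpleGraph (Fin n) :=
  SimpleGraph.fromEdgeSet {e | ∃ h : ¬ e.IsDiag, ω ⟨e, h⟩ = true}

/-- `H` contains a (not necessarily induced) copy of `F`. -/
def ContainsCopy {α β : Type*} (F : SimpleGraph α) (H : SimpleGraph β) : Prop :=
  ∃ f : α → β, Function.Injective f ∧ ∀ ⦃a b⦄, F.Adj a b → H.Adj (f a) (f b)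

/-- `H` is `F`-saturated in `G`: `H` is a spanning subgraph of `G` that is `F`-free,
and adding any edge of `G` missing from `H` creates a copy of `F`. -/
def IsSaturatedIn {V : Type*} {α : Type*} (G H : SimpleGraph V) (F : SimpleGraph α) : Prop :=
  H ≤ G ∧ ¬ ContainsCopy F H ∧
    ∀ v w : V, G.Adj v w → ¬ H.Adj v w →
      ContainsCopy F (H ⊔ SimpleGraph.fromEdgeSet {s(v, w)})

/-- The saturation number `sat(G,F)`: the minimum number of edges of an
`F`-saturated spanning subgraph of `G`. -/
noncomputable def satNum {V α : Type*} (G : SimpleGraph V) (F : SimpleGraph α) : ℕ :=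
  sInf {k | ∃ H : SimpleGraph V, IsSaturatedIn G H F ∧ H.edgeSet.ncard = k}

/-- The cycle `C_m`, as a graph on `ZMod m`. -/
def cycGraph (m : ℕ) : SimpleGraph (ZMod m) :=
  SimpleGraph.fromRel (fun a b => a = b + 1)

open Asymptotics

section Saturation

variable {V α : Type*} {G H : SimpleGraph V} {F : SimpleGraph α}

lemma containsCopy_iff_isContained : ContainsCopy F H ↔ F.IsContained H :=
  ⟨fun ⟨f, hf, hadj⟩ => ⟨⟨f, @hadj⟩, hf⟩, fun ⟨f⟩ => ⟨f, f.injective, fun _ _ => f.toHom.map_adj⟩⟩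

lemma exists_isSaturatedIn [Finite V] (G : SimpleGraph V) (hF : F ≠ ⊥) :
    ∃ H, IsSaturatedIn G H F := by
  obtain ⟨H, ⟨hHG, hfree⟩, hmax⟩ :=
    (Set.toFinite {H : SimpleGraph V | H ≤ G ∧ ¬ ContainsCopy F H}).exists_maximal
      ⟨⊥, bot_le, containsCopy_iff_isContained.not.2 (SimpleGraph.free_bot hF)⟩
  refine ⟨H, hHG, hfree, fun v w hvw hnadj => ?_⟩
  by_contra hcopy
  have hle : H ⊔ SimpleGraph.fromEdgeSet {s(v, w)} ≤ G :=
    sup_le hHG (by simpa [SimpleGraph.fromEdgeSet_le] using Or.inr hvw)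
  have hadj : (H ⊔ SimpleGraph.fromEdgeSet {s(v, w)}).Adj v w := by simp [hvw.ne]
  exact hnadj (hmax ⟨hle, hcopy⟩ le_sup_left hadj)

lemma exists_isSaturatedIn_ncard_edgeSet_eq_satNum [Finite V] (G : SimpleGraph V) (hF : F ≠ ⊥) :
    ∃ H, IsSaturatedIn G H F ∧ H.edgeSet.ncard = satNum G F := by
  obtain ⟨H, hH⟩ := exists_isSaturatedIn G hF
  exact Nat.sInf_mem (s := {k | ∃ H, IsSaturatedIn G H F ∧ H.edgeSet.ncard = k}) ⟨_, H, hH, rfl⟩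

end Saturation

section Cycles

variable {V : Type*} {G H : SimpleGraph V} {m : ℕ}

lemma cycGraph_adj_add_one (hm : 2 ≤ m) (i : ZMod m) : (cycGraph m).Adj i (i + 1) := by
  have : Fact (1 < m) := ⟨hm⟩
  simp [cycGraph]

lemma cycGraph_ne_bot (hm : 2 ≤ m) : cycGraph m ≠ ⊥ :=
  SimpleGraph.ne_bot_iff_exists_adj.2 ⟨0, _, cycGraph_adj_add_one hm 0⟩

lemma injective_edge_add_one (hm : 3 ≤ m) {f : ZMod m → V} (hf : f.Injective) :
    Function.Injective fun i => s(f i, f (i + 1)) := by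
  intro i j hij
  rcases Sym2.eq_iff.1 hij with ⟨hi, -⟩ | ⟨hi, hj⟩
  · exact hf hi
  · have htwo : ((2 : ℕ) : ZMod m) = 0 := by
      have hi := hf hi
      have hj := hf hj
      push_cast
      linear_combination hj - hi
    exact absurd (Nat.le_of_dvd two_pos ((ZMod.natCast_eq_zero_iff 2 m).1 htwo)) (by omega)

lemma exists_walk_of_adj_add_one {f : ZMod m → V} {i : ZMod m}
    (hadj : ∀ j ≠ i, H.Adj (f j) (f (j + 1))) {k : ℕ} (hk : k < m) :
    ∃ q : H.Walk (f (i + 1)) (f (i + 1 + k)), q.length = k := by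
  induction k with
  | zero => exact ⟨SimpleGraph.Walk.nil.copy rfl (by simp), by simp⟩
  | succ k ih =>
    obtain ⟨q, hq⟩ := ih (by omega)
    have hne : i + 1 + k ≠ i := fun h => by
      have hzero : ((k + 1 : ℕ) : ZMod m) = 0 := by
        push_cast
        linear_combination h
      exact absurd (Nat.le_of_dvd k.succ_pos ((ZMod.natCast_eq_zero_iff _ m).1 hzero)) (by omega)
    exact ⟨(q.concat (hadj _ hne)).copy rfl (by push_cast; ring_nf), by simp [hq]⟩

/- The copy of `C_m` created by `vw` must use `vw`, and only once; the rest of the cycle is the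
walk. -/
lemma IsSaturatedIn.exists_walk_length_add_one_eq (hH : IsSaturatedIn G H (cycGraph m))
    (hm : 3 ≤ m) {v w : V} (hvw : G.Adj v w) (hnadj : ¬ H.Adj v w) :
    ∃ q : H.Walk v w, q.length + 1 = m := by
  obtain ⟨f, hf, hcycle⟩ := hH.2.2 v w hvw hnadj
  have hstep (j : ZMod m) : H.Adj (f j) (f (j + 1)) ∨ s(f j, f (j + 1)) = s(v, w) :=
    (hcycle (cycGraph_adj_add_one (by omega) j)).imp_right And.left
  obtain ⟨i, hi⟩ : ∃ i, ¬ H.Adj (f i) (f (i + 1)) := by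
    by_contra! hadj
    refine hH.2.1 ⟨f, hf, fun a b hab => ?_⟩
    rcases ((SimpleGraph.fromRel_adj _ _ _).1 hab).2 with rfl | rfl
    · exact (hadj b).symm
    · exact hadj a
  have hiEq := (hstep i).resolve_left hi
  have hadj (j : ZMod m) (hj : j ≠ i) : H.Adj (f j) (f (j + 1)) :=
    (hstep j).resolve_right fun hjEq => hj (injective_edge_add_one hm hf (hjEq.trans hiEq.symm))
  have hend : i + 1 + (m - 1 : ℕ) = i := by
    rw [Nat.cast_sub (by omega), ZMod.natCast_self]
    push_cast
    ring
  obtain ⟨q, hq⟩ := exists_walk_of_adj_add_one hadj (k := m - 1) (by omega)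
  rcases Sym2.eq_iff.1 hiEq with ⟨hv, hw⟩ | ⟨hw, hv⟩
  · exact ⟨(q.copy hw (by rw [hend, hv])).reverse, by
      simp only [SimpleGraph.Walk.length_reverse, SimpleGraph.Walk.length_copy]
      omega⟩
  · exact ⟨q.copy hv (by rw [hend, hw]), by
      simp only [SimpleGraph.Walk.length_copy]
      omega⟩

end Cycles

section DegreeCounting

variable {V : Type*} [Fintype V] (H : SimpleGraph V) [DecidableRel H.Adj] (K : ℕ)

/-- The vertices of large degree, `K` being the threshold. -/
def hubs : Finset V := {v | K ≤ H.degree v}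

/-- The vertices of degree at most two with no hub among their neighbours; these are the vertices
of small degree that no hub can compensate for. -/
def hubFreeVertices : Finset V := {v | H.degree v ≤ 2 ∧ ∀ x, H.Adj v x → H.degree x < K}

/-- The leaves whose unique neighbour is a hub. -/
def hubLeaves : Finset V := {v | H.degree v = 1 ∧ ∃ b ∈ hubs H K, H.Adj v b}

variable {H K}

lemma mem_hubs {v : V} : v ∈ hubs H K ↔ K ≤ H.degree v := by
  simp [hubs]

lemma mem_hubFreeVertices {v : V} :
    v ∈ hubFreeVertices H K ↔ H.degree v ≤ 2 ∧ ∀ x, H.Adj v x → H.degree x < K := by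
  simp [hubFreeVertices]

lemma mem_hubLeaves {v : V} :
    v ∈ hubLeaves H K ↔ H.degree v = 1 ∧ ∃ b ∈ hubs H K, H.Adj v b := by
  simp [hubLeaves]

variable (H K)

lemma mul_card_hubs_le_two_mul_card_edgeFinset : K * (hubs H K).card ≤ 2 * H.edgeFinset.card :=
  calc K * (hubs H K).card = (hubs H K).card • K := by rw [smul_eq_mul, mul_comm]
    _ ≤ ∑ v ∈ hubs H K, H.degree v := Finset.card_nsmul_le_sum _ _ _ fun _ => mem_hubs.1
    _ ≤ ∑ v, H.degree v := Finset.sum_le_univ_sum_of_nonneg fun _ => Nat.zero_le _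
    _ = 2 * H.edgeFinset.card := H.sum_degrees_eq_twice_card_edges

lemma sum_card_filter_adj_le_sum_degree (A B : Finset V) :
    ∑ v ∈ A, (B.filter (H.Adj v)).card ≤ ∑ b ∈ B, H.degree b :=
  calc ∑ v ∈ A, (B.filter (H.Adj v)).card = ∑ b ∈ B, (A.filter (H.Adj · b)).card :=
        Finset.sum_card_bipartiteAbove_eq_sum_card_bipartiteBelow _
    _ ≤ ∑ b ∈ B, H.degree b := Finset.sum_le_sum fun b _ => by
        rw [← H.card_neighborFinset_eq_degree]
        exact Finset.card_le_card fun v hv => by simpa using (Finset.mem_filter.1 hv).2.symm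

variable {H K}

lemma three_le_degree_add_card_filter_hubs {v : V} (hfree : v ∉ hubFreeVertices H K)
    (hleaf : v ∉ hubLeaves H K) : 3 ≤ H.degree v + ((hubs H K).filter (H.Adj v)).card := by
  by_cases hdeg : 3 ≤ H.degree v
  · omega
  obtain ⟨b, hvb, hb⟩ : ∃ b, H.Adj v b ∧ K ≤ H.degree b := by
    by_contra! hsmall
    exact hfree (mem_hubFreeVertices.2 ⟨by omega, hsmall⟩)
  have hhub : b ∈ hubs H K := mem_hubs.2 hb
  have hpos : 0 < H.degree v := (H.degree_pos_iff_exists_adj v).2 ⟨b, hvb⟩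
  have hne_one : H.degree v ≠ 1 := fun h => hleaf (mem_hubLeaves.2 ⟨h, b, hhub, hvb⟩)
  have hcard : 0 < ((hubs H K).filter (H.Adj v)).card :=
    Finset.card_pos.2 ⟨b, Finset.mem_filter.2 ⟨hhub, hvb⟩⟩
  omega

variable (H K) in
/- An edge from a vertex outside `hubs H K` to a hub is charged twice to the former: once in its own
degree and once out of the degree of the hub. -/
lemma three_mul_card_le_two_mul_card_edgeFinset_add :
    3 * Fintype.card V ≤ 2 * H.edgeFinset.card +
      3 * ((hubs H K).card + (hubFreeVertices H K).card + (hubLeaves H K).card) := by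
  classical
  set E := hubs H K ∪ hubFreeVertices H K ∪ hubLeaves H K with hE
  have hcardE : E.card ≤ (hubs H K).card + (hubFreeVertices H K).card + (hubLeaves H K).card :=
    (Finset.card_union_le _ _).trans (by gcongr; exact Finset.card_union_le _ _)
  have hthree : ∀ v ∈ Eᶜ, 3 ≤ H.degree v + ((hubs H K).filter (H.Adj v)).card := by
    intro v hv
    simp only [hE, Finset.mem_compl, Finset.mem_union, not_or] at hv
    exact three_le_degree_add_card_filter_hubs hv.1.2 hv.2
  have hrest : Eᶜ.card * 3 ≤ 2 * H.edgeFinset.card :=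
    calc Eᶜ.card * 3 ≤ ∑ v ∈ Eᶜ, (H.degree v + ((hubs H K).filter (H.Adj v)).card) :=
          Finset.card_nsmul_le_sum _ _ _ hthree
      _ = ∑ v ∈ Eᶜ, H.degree v + ∑ v ∈ Eᶜ, ((hubs H K).filter (H.Adj v)).card :=
          Finset.sum_add_distrib
      _ ≤ ∑ v ∈ (hubs H K)ᶜ, H.degree v + ∑ v ∈ hubs H K, H.degree v := by
          gcongr
          · exact Finset.subset_union_left.trans Finset.subset_union_left
          · exact sum_card_filter_adj_le_sum_degree H _ _
      _ = ∑ v, H.degree v := Finset.sum_compl_add_sum _ _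
      _ = 2 * H.edgeFinset.card := H.sum_degrees_eq_twice_card_edges
  have hcard : E.card + Eᶜ.card = Fintype.card V := Finset.card_add_card_compl E
  omega

end DegreeCounting

section IndependenceNumber

variable {V : Type*} {G H : SimpleGraph V}

lemma card_le_mul_indepNum [Finite V] [DecidableRel G.Adj] {S : Finset V} {D : ℕ}
    (hD : ∀ u ∈ S, (S.filter (G.Adj u)).card ≤ D) : S.card ≤ (D + 1) * G.indepNum := by
  classical
  obtain ⟨I, ⟨hIS, hI⟩, hmax⟩ :=
    (Set.toFinite {I : Finset V | I ⊆ S ∧ G.IsIndepSet (I : Set V)}).exists_maximal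
      ⟨∅, by simp [SimpleGraph.IsIndepSet]⟩
  have hcover : S ⊆ I.biUnion fun u => insert u (S.filter (G.Adj u)) := by
    intro v hv
    by_contra hfar
    simp only [Finset.mem_biUnion, Finset.mem_insert, Finset.mem_filter, not_exists, not_and,
      not_or] at hfar
    have hins : G.IsIndepSet (insert v I : Finset V) := by
      rw [Finset.coe_insert]
      exact Set.Pairwise.insert hI fun u hu _ =>
        ⟨fun h => (hfar u hu).2 hv h.symm, (hfar u hu).2 hv⟩
    have hvI : v ∈ I :=
      hmax ⟨Finset.insert_subset hv hIS, hins⟩ (Finset.subset_insert v I)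
        (Finset.mem_insert_self v I)
    exact (hfar v hvI).1 rfl
  calc S.card ≤ (I.biUnion fun u => insert u (S.filter (G.Adj u))).card :=
        Finset.card_le_card hcover
    _ ≤ I.card * (D + 1) := Finset.card_biUnion_le_card_mul _ _ _ fun u hu =>
        (Finset.card_insert_le _ _).trans (Nat.succ_le_succ (hD u (hIS hu)))
    _ ≤ (D + 1) * G.indepNum := by
        rw [mul_comm]
        exact Nat.mul_le_mul_left _ hI.card_le_indepNum

lemma IsSaturatedIn.adj_or_exists_adj_adj_adj (hH : IsSaturatedIn G H (cycGraph 4)) {v w : V}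
    (hvw : G.Adj v w) : H.Adj v w ∨ ∃ x y, H.Adj v x ∧ H.Adj x y ∧ H.Adj y w := by
  refine or_iff_not_imp_left.2 fun hnadj => ?_
  obtain ⟨q, hq⟩ := hH.exists_walk_length_add_one_eq (by norm_num) hvw hnadj
  have hlen : q.length = 3 := by omega
  refine ⟨q.getVert 1, q.getVert 2, ?_, q.adj_getVert_succ (by omega), ?_⟩
  · simpa using q.adj_getVert_succ (i := 0) (by omega)
  · simpa [← hlen] using q.adj_getVert_succ (i := 2) (by omega)

variable [Fintype V] [DecidableRel H.Adj] {K : ℕ}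

lemma IsSaturatedIn.card_filter_adj_hubFreeVertices_le [DecidableRel G.Adj]
    (hH : IsSaturatedIn G H (cycGraph 4)) {u : V} (hu : u ∈ hubFreeVertices H K) :
    ((hubFreeVertices H K).filter (G.Adj u)).card ≤ 2 * K ^ 2 + 2 := by
  classical
  set ends : Finset V := (H.neighborFinset u).biUnion fun x =>
    ((H.neighborFinset x).filter (H.degree · < K)).biUnion fun y => H.neighborFinset y with hends
  obtain ⟨hdeg, hsmall⟩ := mem_hubFreeVertices.1 hu
  have hsub : (hubFreeVertices H K).filter (G.Adj u) ⊆ H.neighborFinset u ∪ ends := by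
    intro v hv
    obtain ⟨hv, huv⟩ := Finset.mem_filter.1 hv
    simp only [hends, Finset.mem_union, Finset.mem_biUnion, Finset.mem_filter,
      SimpleGraph.mem_neighborFinset]
    refine (hH.adj_or_exists_adj_adj_adj huv).imp_right ?_
    rintro ⟨x, y, hux, hxy, hyv⟩
    exact ⟨x, hux, y, ⟨hxy, (mem_hubFreeVertices.1 hv).2 y hyv.symm⟩, hyv⟩
  have hcard_ends : ends.card ≤ H.degree u * (K * K) := by
    refine Finset.card_biUnion_le_card_mul _ _ _ fun x hx => ?_
    refine (Finset.card_biUnion_le_card_mul _ _ K fun y hy => ?_).trans ?_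
    · exact (Finset.mem_filter.1 hy).2.le
    · gcongr
      exact (Finset.card_filter_le _ _).trans (hsmall x (by simpa using hx)).le
  calc ((hubFreeVertices H K).filter (G.Adj u)).card
      ≤ H.degree u + ends.card := (Finset.card_le_card hsub).trans (Finset.card_union_le _ _)
    _ ≤ 2 + 2 * (K * K) := by
        gcongr
        exact hcard_ends.trans (by gcongr)
    _ = 2 * K ^ 2 + 2 := by ring

lemma IsSaturatedIn.card_hubFreeVertices_le (hH : IsSaturatedIn G H (cycGraph 4)) :
    (hubFreeVertices H K).card ≤ (2 * K ^ 2 + 3) * G.indepNum := by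
  classical
  exact card_le_mul_indepNum fun u hu => hH.card_filter_adj_hubFreeVertices_le hu

/- The middle edge of a walk of length three between two leaves at `b` would be a loop at `b`. -/
lemma IsSaturatedIn.isIndepSet_leaves (hH : IsSaturatedIn G H (cycGraph 4)) (b : V) :
    G.IsIndepSet {v | H.degree v = 1 ∧ H.Adj v b} := by
  rintro u ⟨hu, hub⟩ v ⟨hv, hvb⟩ - huv
  have eq_of_adj_leaf {w x : V} (hw : H.degree w = 1) (hwb : H.Adj w b) (hwx : H.Adj w x) :
      x = b := (SimpleGraph.degree_eq_one_iff_existsUnique_adj.1 hw).unique hwx hwb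
  rcases hH.adj_or_exists_adj_adj_adj huv with hadj | ⟨x, y, hux, hxy, hyv⟩
  · exact hvb.ne (eq_of_adj_leaf hu hub hadj)
  · exact hxy.ne ((eq_of_adj_leaf hu hub hux).trans (eq_of_adj_leaf hv hvb hyv.symm).symm)

lemma IsSaturatedIn.card_hubLeaves_le (hH : IsSaturatedIn G H (cycGraph 4)) :
    (hubLeaves H K).card ≤ (hubs H K).card * G.indepNum := by
  classical
  have hsub : hubLeaves H K ⊆ (hubs H K).biUnion fun b => {v | H.degree v = 1 ∧ H.Adj v b} := by
    intro v hv
    obtain ⟨hdeg, b, hb, hvb⟩ := mem_hubLeaves.1 hv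
    exact Finset.mem_biUnion.2 ⟨b, hb, by simp [hdeg, hvb]⟩
  refine (Finset.card_le_card hsub).trans (Finset.card_biUnion_le_card_mul _ _ _ fun b _ => ?_)
  exact SimpleGraph.IsIndepSet.card_le_indepNum (by simpa using hH.isIndepSet_leaves b)

lemma IsSaturatedIn.three_mul_card_le (hH : IsSaturatedIn G H (cycGraph 4)) (K : ℕ) :
    3 * Fintype.card V ≤ 2 * H.edgeFinset.card +
      3 * ((2 * K ^ 2 + 3) * G.indepNum + (hubs H K).card * (G.indepNum + 1)) :=
  calc 3 * Fintype.card V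
      ≤ 2 * H.edgeFinset.card +
          3 * ((hubs H K).card + (hubFreeVertices H K).card + (hubLeaves H K).card) :=
        three_mul_card_le_two_mul_card_edgeFinset_add H K
    _ ≤ 2 * H.edgeFinset.card +
          3 * ((hubs H K).card + (2 * K ^ 2 + 3) * G.indepNum +
            (hubs H K).card * G.indepNum) := by
        gcongr
        exacts [hH.card_hubFreeVertices_le, hH.card_hubLeaves_le]
    _ = 2 * H.edgeFinset.card +
          3 * ((2 * K ^ 2 + 3) * G.indepNum + (hubs H K).card * (G.indepNum + 1)) := by ring

/- With threshold `K = C (α + 1)` there are at most `2 e(H) / K` hubs, so hubs and hub leaves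
together number `O(n / C)`, while the hub-free vertices number `O(C² α³)`. -/
lemma IsSaturatedIn.le_card_edgeFinset (hH : IsSaturatedIn G H (cycGraph 4)) {ε : ℝ} {C : ℕ}
    (hC : 9 ≤ ε * C)
    (hα : 3 * (2 * C ^ 2 + 3) * ((G.indepNum : ℝ) + 1) ^ 3 ≤ ε * Fintype.card V) :
    (3 / 2 - ε) * Fintype.card V ≤ H.edgeFinset.card := by
  set n := (Fintype.card V : ℝ)
  set e := (H.edgeFinset.card : ℝ)
  set a := (G.indepNum : ℝ)
  set b := ((hubs H (C * (G.indepNum + 1))).card : ℝ)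
  have hε : 0 < ε := pos_of_mul_pos_left (by linarith) (Nat.cast_nonneg C)
  have ha : 0 ≤ a := Nat.cast_nonneg _
  have hb : 0 ≤ b * (a + 1) := by positivity
  have hn : 0 ≤ ε * n := by positivity
  rcases le_or_gt (3 * n) (2 * e) with hlarge | hsmall
  · linarith
  have hcount : 3 * n ≤ 2 * e + 3 * ((2 * (C * (a + 1)) ^ 2 + 3) * a + b * (a + 1)) := by
    simp only [n, e, a, b]
    exact_mod_cast hH.three_mul_card_le (C * (G.indepNum + 1))
  have hhubs : C * (a + 1) * b ≤ 2 * e := by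
    simp only [e, a, b]
    exact_mod_cast mul_card_hubs_le_two_mul_card_edgeFinset H (C * (G.indepNum + 1))
  have hhub_terms : 9 * (b * (a + 1)) ≤ 3 * (ε * n) :=
    calc 9 * (b * (a + 1)) ≤ ε * C * (b * (a + 1)) := by gcongr
      _ = ε * (C * (a + 1) * b) := by ring
      _ ≤ ε * (3 * n) := mul_le_mul_of_nonneg_left (hhubs.trans hsmall.le) hε.le
      _ = 3 * (ε * n) := by ring
  have hfree_term : 3 * ((2 * (C * (a + 1)) ^ 2 + 3) * a) ≤ ε * n :=
    calc 3 * ((2 * (C * (a + 1)) ^ 2 + 3) * a)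
        ≤ 3 * ((2 * (C * (a + 1)) ^ 2 + 3 * (a + 1) ^ 2) * (a + 1)) := by
          gcongr <;> nlinarith
      _ = 3 * (2 * C ^ 2 + 3) * (a + 1) ^ 3 := by ring
      _ ≤ ε * n := hα
  linarith

lemma le_satNum_cycGraph_four (G : SimpleGraph V) {ε : ℝ} {C : ℕ} (hC : 9 ≤ ε * C)
    (hα : 3 * (2 * C ^ 2 + 3) * ((G.indepNum : ℝ) + 1) ^ 3 ≤ ε * Fintype.card V) :
    (3 / 2 - ε) * Fintype.card V ≤ satNum G (cycGraph 4) := by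
  classical
  obtain ⟨H, hH, hcard⟩ :=
    exists_isSaturatedIn_ncard_edgeSet_eq_satNum G (cycGraph_ne_bot (m := 4) (by norm_num))
  rw [← hcard, ← SimpleGraph.coe_edgeFinset, Set.ncard_coe_finset]
  exact hH.le_card_edgeFinset hC hα

end IndependenceNumber

section RandomGraph

variable {n : ℕ} {p : ℝ}

instance (n : ℕ) (p : ℝ) : IsProbabilityMeasure (erMeasure n p) := by
  unfold erMeasure
  infer_instance

lemma erMeasure_forall_mem_eq_false (hp0 : 0 ≤ p) (hp1 : p ≤ 1) (E : Finset (EdgeType n)) :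
    erMeasure n p {ω | ∀ e ∈ E, ω e = false} = ENNReal.ofReal (1 - p) ^ E.card := by
  have hset : {ω : EdgeType n → Bool | ∀ e ∈ E, ω e = false} =
      Set.univ.pi fun e => if e ∈ E then {false} else Set.univ := by
    ext ω
    refine forall_congr' fun e => ?_
    by_cases he : e ∈ E <;> simp [he]
  have hfalse : ((1 - min p.toNNReal 1 : NNReal) : ENNReal) = ENNReal.ofReal (1 - p) := by
    rw [min_eq_left (Real.toNNReal_le_one.2 hp1), ENNReal.ofReal,
      NNReal.sub_def, Real.coe_toNNReal p hp0, NNReal.coe_one]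
  rw [hset, erMeasure, Measure.pi_pi]
  simp only [apply_ite, measure_univ]
  rw [Finset.prod_ite_mem, Finset.univ_inter, Finset.prod_const,
    PMF.toMeasure_apply_singleton _ _ (measurableSet_singleton _)]
  exact congrArg (· ^ E.card) hfalse

/-- The potential edges of a graph on `Fin n` with both ends in `I`: the coordinates on which the
independence of `I` depends. -/
def potentialEdgesWithin (I : Finset (Fin n)) : Finset (EdgeType n) :=
  I.sym2.subtype fun e => ¬ e.IsDiag

lemma mk_mem_potentialEdgesWithin {I : Finset (Fin n)} {v w : Fin n} {h : ¬ s(v, w).IsDiag} :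
    ⟨s(v, w), h⟩ ∈ potentialEdgesWithin I ↔ v ∈ I ∧ w ∈ I := by
  rw [potentialEdgesWithin, Finset.mem_subtype, Finset.mk_mem_sym2_iff]

lemma card_potentialEdgesWithin (I : Finset (Fin n)) :
    (potentialEdgesWithin I).card = I.card.choose 2 := by
  rw [potentialEdgesWithin, Finset.card_subtype, ← Sym2.card_image_offDiag]
  congr 1
  ext e
  induction e with | _ v w
  simp only [Finset.mem_filter, Finset.mk_mem_sym2_iff, Sym2.mk_isDiag_iff, Finset.mem_image,
    Finset.mem_offDiag, Prod.exists]
  grind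

lemma isIndepSet_graphOf_iff {ω : EdgeType n → Bool} {I : Finset (Fin n)} :
    (graphOf ω).IsIndepSet (I : Set (Fin n)) ↔
      ∀ e ∈ potentialEdgesWithin I, ω e = false := by
  constructor
  · rintro hI ⟨e, he⟩ heI
    induction e with | _ v w
    obtain ⟨hv, hw⟩ := mk_mem_potentialEdgesWithin.1 heI
    have hvw : v ≠ w := he
    simpa [graphOf, hvw] using hI hv hw hvw
  · intro h v hv w hw hvw
    have hfalse := h ⟨s(v, w), hvw⟩ (mk_mem_potentialEdgesWithin.2 ⟨hv, hw⟩)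
    simp [graphOf, hvw, hfalse]

lemma erMeasure_isIndepSet (hp0 : 0 ≤ p) (hp1 : p ≤ 1) (I : Finset (Fin n)) :
    erMeasure n p {ω | (graphOf ω).IsIndepSet (I : Set (Fin n))} =
      ENNReal.ofReal (1 - p) ^ I.card.choose 2 := by
  simp_rw [isIndepSet_graphOf_iff]
  rw [erMeasure_forall_mem_eq_false hp0 hp1, card_potentialEdgesWithin]

lemma erMeasure_lt_indepNum_le (hp0 : 0 ≤ p) (hp1 : p ≤ 1) (a : ℕ) :
    erMeasure n p {ω | a < (graphOf ω).indepNum} ≤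
      (n : ENNReal) ^ (a + 1) * ENNReal.ofReal (1 - p) ^ (a + 1).choose 2 := by
  set S := Finset.powersetCard (a + 1) (Finset.univ : Finset (Fin n)) with hS
  have hsub : {ω | a < (graphOf ω).indepNum} ⊆
      ⋃ I ∈ S, {ω | (graphOf ω).IsIndepSet (I : Set (Fin n))} := by
    intro ω hω
    obtain ⟨J, hJ⟩ := (graphOf ω).exists_isNIndepSet_indepNum
    obtain ⟨I, hIJ, hI⟩ := Finset.exists_subset_card_eq (hJ.card_eq.symm ▸ hω : a + 1 ≤ J.card)
    exact Set.mem_biUnion (Finset.mem_powersetCard_univ.2 hI)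
      (hJ.isIndepSet.mono (Finset.coe_subset.2 hIJ))
  calc erMeasure n p {ω | a < (graphOf ω).indepNum}
      ≤ ∑ I ∈ S, erMeasure n p {ω | (graphOf ω).IsIndepSet (I : Set (Fin n))} :=
        (measure_mono hsub).trans (measure_biUnion_finset_le _ _)
    _ = ∑ _ ∈ S, ENNReal.ofReal (1 - p) ^ (a + 1).choose 2 :=
        Finset.sum_congr rfl fun _ hI => by
          rw [erMeasure_isIndepSet hp0 hp1, Finset.mem_powersetCard_univ.1 hI]
    _ = n.choose (a + 1) * ENNReal.ofReal (1 - p) ^ (a + 1).choose 2 := by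
        simp [hS]
    _ ≤ (n : ENNReal) ^ (a + 1) * ENNReal.ofReal (1 - p) ^ (a + 1).choose 2 := by
        gcongr
        exact_mod_cast Nat.choose_le_pow n (a + 1)

lemma pow_mul_one_sub_pow_choose_two_le_inv (hp1 : p ≤ 1) (hn : 0 < n) {a : ℕ}
    (ha : 4 * log n ≤ p * a) :
    (n : ℝ) ^ (a + 1) * (1 - p) ^ (a + 1).choose 2 ≤ (n : ℝ)⁻¹ := by
  have hn' : (0 : ℝ) < n := by exact_mod_cast hn
  have hlog : 0 ≤ log n := log_natCast_nonneg n
  have ha0 : (0 : ℝ) ≤ a := Nat.cast_nonneg a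
  calc (n : ℝ) ^ (a + 1) * (1 - p) ^ (a + 1).choose 2
      ≤ exp (log n) ^ (a + 1) * exp (-p) ^ (a + 1).choose 2 := by
        rw [exp_log hn']
        gcongr
        exact one_sub_le_exp_neg p
    _ = exp ((a + 1) * (log n - p * a / 2)) := by
        rw [← exp_nat_mul, ← exp_nat_mul, ← exp_add, Nat.cast_choose_two]
        push_cast
        ring_nf
    _ ≤ exp (-log n) := by
        have hgap : log n - p * a / 2 ≤ -log n := by linarith
        gcongr
        calc (a + 1) * (log n - p * a / 2) ≤ (a + 1) * -log n := by gcongr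
          _ ≤ -log n := by linarith [mul_nonneg ha0 hlog]
    _ = (n : ℝ)⁻¹ := by rw [exp_neg, exp_log hn']

lemma one_sub_inv_le_erMeasure_indepNum_le (hp0 : 0 ≤ p) (hp1 : p ≤ 1) (hn : 0 < n) {a : ℕ}
    (ha : 4 * log n ≤ p * a) :
    1 - (n : ENNReal)⁻¹ ≤ erMeasure n p {ω | (graphOf ω).indepNum ≤ a} := by
  have hcompl : {ω | (graphOf ω).indepNum ≤ a} =
      {ω : EdgeType n → Bool | a < (graphOf ω).indepNum}ᶜ := by
    ext ω
    simp
  rw [hcompl, prob_compl_eq_one_sub .of_discrete]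
  gcongr
  calc erMeasure n p {ω | a < (graphOf ω).indepNum}
      ≤ (n : ENNReal) ^ (a + 1) * ENNReal.ofReal (1 - p) ^ (a + 1).choose 2 :=
        erMeasure_lt_indepNum_le hp0 hp1 a
    _ = ENNReal.ofReal ((n : ℝ) ^ (a + 1) * (1 - p) ^ (a + 1).choose 2) := by
        rw [ENNReal.ofReal_mul (by positivity), ENNReal.ofReal_pow (by positivity),
          ENNReal.ofReal_pow (sub_nonneg.2 hp1), ENNReal.ofReal_natCast]
    _ ≤ ENNReal.ofReal (n : ℝ)⁻¹ :=
        ENNReal.ofReal_le_ofReal (pow_mul_one_sub_pow_choose_two_le_inv hp1 hn ha)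
    _ = (n : ENNReal)⁻¹ := by
        rw [ENNReal.ofReal_inv_of_pos (by exact_mod_cast hn), ENNReal.ofReal_natCast]

theorem tendsto_erMeasure_indepNum_le_ceil {p : ℕ → ℝ} (hp0 : ∀ n, 0 < p n)
    (hp1 : ∀ n, p n ≤ 1) :
    Tendsto (fun n : ℕ => erMeasure n (p n) {ω | (graphOf ω).indepNum ≤ ⌈4 * (log n / p n)⌉₊})
      atTop (nhds 1) := by
  have hlim : Tendsto (fun n : ℕ => 1 - (n : ENNReal)⁻¹) atTop (nhds 1) := by
    simpa using ENNReal.Tendsto.sub tendsto_const_nhds ENNReal.tendsto_inv_nat_nhds_zero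
      (Or.inl ENNReal.one_ne_top)
  refine tendsto_of_tendsto_of_tendsto_of_le_of_le' hlim tendsto_const_nhds ?_
    (.of_forall fun n => prob_le_one)
  filter_upwards [eventually_gt_atTop 0] with n hn
  refine one_sub_inv_le_erMeasure_indepNum_le (hp0 n).le (hp1 n) hn ?_
  calc 4 * log n = p n * (4 * (log n / p n)) := by field_simp [(hp0 n).ne']
    _ ≤ p n * ⌈4 * (log n / p n)⌉₊ :=
      mul_le_mul_of_nonneg_left (Nat.le_ceil _) (hp0 n).le

end RandomGraph

section Asymptotics

lemma isLittleO_pow_three_natCeil_add_one {f : ℕ → ℝ} (hf0 : ∀ n, 0 ≤ f n)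
    (hf : f =o[atTop] fun n => (n : ℝ) ^ (1 / 3 : ℝ)) :
    (fun n => ((⌈f n⌉₊ : ℝ) + 1) ^ 3) =o[atTop] fun n => (n : ℝ) := by
  have hroot : Tendsto (fun n : ℕ => (n : ℝ) ^ (1 / 3 : ℝ)) atTop atTop :=
    (tendsto_rpow_atTop (by norm_num)).comp tendsto_natCast_atTop_atTop
  have hone : (fun _ => (2 : ℝ)) =o[atTop] fun n : ℕ => (n : ℝ) ^ (1 / 3 : ℝ) :=
    isLittleO_const_left.2 (.inr (tendsto_norm_atTop_atTop.comp hroot))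
  have hceil : (fun n => (⌈f n⌉₊ : ℝ) + 1) =O[atTop] fun n => f n + 2 :=
    .of_bound 1 (.of_forall fun n => by
      have := Nat.ceil_lt_add_one (hf0 n)
      rw [norm_of_nonneg (by positivity), norm_of_nonneg (by linarith [hf0 n])]
      linarith)
  refine ((hceil.trans_isLittleO (hf.add hone)).pow three_pos).congr_right fun n => ?_
  rw [← rpow_natCast, ← rpow_mul n.cast_nonneg]
  norm_num

end Asymptotics

theorem c4_saturation_lower_general (p : ℕ → ℝ) (hp0 : ∀ n, 0 < p n) (hp1 : ∀ n, p n ≤ 1)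
    (hp : (fun n : ℕ => log n / p n) =o[atTop] fun n => (n : ℝ) ^ (1 / 3 : ℝ))
    (ε : ℝ) (hε : 0 < ε) :
    Tendsto (fun n : ℕ =>
      erMeasure n (p n) {ω |
        (3 / 2 - ε) * n ≤ (satNum (graphOf ω) (cycGraph 4) : ℝ)})
      atTop (nhds 1) := by
  obtain ⟨C, hC⟩ := exists_nat_ge (9 / ε)
  have hC' : 9 ≤ ε * C := (div_le_iff₀' hε).1 hC
  have hcube := (isLittleO_pow_three_natCeil_add_one
    (fun n => mul_nonneg zero_le_four (div_nonneg (log_natCast_nonneg n) (hp0 n).le))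
    (hp.const_mul_left 4)).const_mul_left (3 * (2 * (C : ℝ) ^ 2 + 3))
  refine tendsto_of_tendsto_of_tendsto_of_le_of_le' (tendsto_erMeasure_indepNum_le_ceil hp0 hp1)
    tendsto_const_nhds ?_ (.of_forall fun n => prob_le_one)
  filter_upwards [hcube.bound hε] with n hn
  refine measure_mono fun ω hω => ?_
  have hα : 3 * (2 * C ^ 2 + 3) * (((graphOf ω).indepNum : ℝ) + 1) ^ 3 ≤
      ε * Fintype.card (Fin n) := by
    refine le_trans ?_ ((le_norm_self _).trans (hn.trans_eq (by simp)))
    gcongr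
    exact hω
  simpa using le_satNum_cycGraph_four (graphOf ω) hC' hα

/-- For fixed `p ∈ (0,1)`, whp `sat(G(n,p), C_4) ≥ (3/2)·n·(1+o(1))`:
for every `ε > 0`, whp `sat(G(n,p), C_4) ≥ (3/2 − ε)·n`. -/
theorem c4_saturation_lower (p : ℝ) (hp0 : 0 < p) (hp1 : p < 1) (ε : ℝ) (hε : 0 < ε) :
    Tendsto (fun n : ℕ =>
      erMeasure n p {ω |
        (3 / 2 - ε) * n ≤ (satNum (graphOf ω) (cycGraph 4) : ℝ)})
      atTop (nhds 1) := by
  have hp : (fun n : ℕ => log n / p) =o[atTop] fun n => (n : ℝ) ^ (1 / 3 : ℝ) := by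
    simp_rw [div_eq_inv_mul (log _)]
    exact ((isLittleO_log_rpow_atTop (by norm_num)).comp_tendsto
      tendsto_natCast_atTop_atTop).const_mul_left p⁻¹
  exact c4_saturation_lower_general (fun _ => p) (fun _ => hp0) (fun _ => hp1.le) hp ε hε
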